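/- Let M, a₀, b₀ be natural numbers with a₀ ≤ b₀ ≤ M. Define h : ℕ → ℕ × ℕ by h 0 = (a₀, b₀) and, writing h k = (a, b): h (k+1) = (min(a + 2, M), min(b + 1, M)) if a ≤ b, and h (k+1) = (min(a + 1, M), min(b + 2, M)) otherwise. Then for every k ≥ ⌈max( ((M − a₀) + (M − b₀)) / 3, (M − a₀) / 2 : ℚ)⌉ (integer ceiling of a rational), h k = (M, M). -/

import Mathlib

/-!
Say that a state `(a, b)` has budget `n` if the deficits `M - a` and `M - b` are each at most `2 * n`
and their sum is at most `3 * n`. One step turns budget `n + 1` into budget `n`: the larger deficit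
drops by 2 and the smaller by 1. The smaller deficit cannot violate its bound after the step, since
both deficits being equal to `2 * n + 2` would exceed the bound on the sum, and truncation at `M`
is harmless because it only occurs once the other bounds already suffice. Budget `0` means both
deficits vanish, and the ceiling hypothesis says that the initial state has budget `k`.
-/

/-- If the state at time `j` has deficits at most `2 * n` each and `3 * n` in total, then both
devices are complete `n` slots later. No ordering of the two components is assumed, so that the
statement is preserved when the transmitter changes. -/
theorem complete_of_budget (M : ℕ) (h : ℕ → ℕ × ℕ)
    (hstep : ∀ k : ℕ,
      h (k + 1) =
        if (h k).1 ≤ (h k).2 then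
          (min ((h k).1 + 2) M, min ((h k).2 + 1) M)
        else
          (min ((h k).1 + 1) M, min ((h k).2 + 2) M))
    (n : ℕ) : ∀ j : ℕ, (h j).1 ≤ M → (h j).2 ≤ M →
      M ≤ (h j).1 + 2 * n → M ≤ (h j).2 + 2 * n →
      2 * M ≤ (h j).1 + (h j).2 + 3 * n → h (j + n) = (M, M) := by
  induction n with
  | zero =>
    intro j h1 h2 h3 h4 _
    exact Prod.ext (by simp only [Nat.add_zero]; omega) (by simp only [Nat.add_zero]; omega)
  | succ n ih =>
    intro j h1 h2 h3 h4 h5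
    have e : j + (n + 1) = (j + 1) + n := by omega
    rw [e]
    have hs := hstep j
    split_ifs at hs <;> apply ih <;> rw [hs] <;> dsimp only <;> omega

/-- Dynamical core of Theorem 1 (upper bound for NCMI-batch) for two devices:
`a₀, b₀` are the initial Has-set sizes, `M` the total number of packets; in
each slot the device with the larger Has set gains 1 innovative packet while
the other gains 2, capped at `M`. -/
theorem ncmi_batch_two_device_dynamics
    (M a₀ b₀ : ℕ) (hab : a₀ ≤ b₀) (hbM : b₀ ≤ M)
    (h : ℕ → ℕ × ℕ) (h0 : h 0 = (a₀, b₀))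
    (hstep : ∀ k : ℕ,
      h (k + 1) =
        if (h k).1 ≤ (h k).2 then
          (min ((h k).1 + 2) M, min ((h k).2 + 1) M)
        else
          (min ((h k).1 + 1) M, min ((h k).2 + 2) M)) :
    ∀ k : ℕ,
      ⌈max (((((M - a₀ : ℕ) : ℚ) + ((M - b₀ : ℕ) : ℚ)) / 3))
          (((M - a₀ : ℕ) : ℚ) / 2)⌉ ≤ (k : ℤ) →
      h k = (M, M) := by
  intro k hk
  rw [Int.ceil_le, max_le_iff] at hk
  obtain ⟨hsum, hmax⟩ := hk
  have hsum' : (M - a₀) + (M - b₀) ≤ 3 * k := by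
    have : (((M - a₀ : ℕ) : ℚ) + ((M - b₀ : ℕ) : ℚ)) ≤ 3 * (k : ℚ) := by
      simp only [Int.cast_natCast] at hsum
      linarith
    exact_mod_cast this
  have hmax' : M - a₀ ≤ 2 * k := by
    have : ((M - a₀ : ℕ) : ℚ) ≤ 2 * (k : ℚ) := by
      simp only [Int.cast_natCast] at hmax
      linarith
    exact_mod_cast this
  have key := complete_of_budget M h hstep k 0
  rw [h0, Nat.zero_add] at key
  apply key <;> dsimp only <;> omega
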